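/- arXiv:1609.09526 — 4 statements merged into one kernel-verified Lean document; each statement's English description precedes it below -/
import Mathlib

section
/- For every integer c ≥ 1, the lattice triangle T with vertices (0,0), (2c²+2c, 0), (1, c) satisfies b(T) = 2c² + 2c + 2 and i(T) = c³ − c. In particular, the apex (2c²+2c+2, c³−c) of the closure of the cone σ_c° is realized by a lattice triangle. -/
open MeasureTheory

/-- The point of `ℝ²` corresponding to an integer point. -/
def toR2 (z : ℤ × ℤ) : ℝ × ℝ := ((z.1 : ℝ), (z.2 : ℝ))

/-- A lattice polygon: a two-dimensional convex hull of finitely many integer points. -/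
def IsLatticePolygon (P : Set (ℝ × ℝ)) : Prop :=
  ∃ S : Finset (ℤ × ℤ), P = convexHull ℝ (toR2 '' (S : Set (ℤ × ℤ))) ∧ affineSpan ℝ P = ⊤

/-- A lattice triangle: the convex hull of three affinely independent integer points. -/
def IsLatticeTriangle (T : Set (ℝ × ℝ)) : Prop :=
  ∃ v0 v1 v2 : ℤ × ℤ, AffineIndependent ℝ ![toR2 v0, toR2 v1, toR2 v2] ∧
    T = convexHull ℝ {toR2 v0, toR2 v1, toR2 v2}

/-- The number of lattice points on the boundary. -/
noncomputable def bcount (P : Set (ℝ × ℝ)) : ℕ :=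
  Set.ncard {z : ℤ × ℤ | toR2 z ∈ frontier P}

/-- The number of lattice points in the interior. -/
noncomputable def icount (P : Set (ℝ × ℝ)) : ℕ :=
  Set.ncard {z : ℤ × ℤ | toR2 z ∈ interior P}

/-- The Euclidean area. -/
noncomputable def area (P : Set (ℝ × ℝ)) : ℝ := (volume P).toReal


lemma interior_half (a b d : ℝ) (h : 0 < a ^ 2 + b ^ 2) :
    interior {p : ℝ × ℝ | 0 ≤ a * p.1 + b * p.2 + d} = {p | 0 < a * p.1 + b * p.2 + d} := by
  apply Set.Subset.antisymm
  · intro p hp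
    have hg : Continuous (fun t : ℝ => ((p.1 - t * a, p.2 - t * b) : ℝ × ℝ)) := by fun_prop
    have ho := (isOpen_interior (s := {p : ℝ × ℝ | 0 ≤ a * p.1 + b * p.2 + d})).preimage hg
    obtain ⟨e, he, hb⟩ := Metric.isOpen_iff.1 ho 0 (by simpa using hp)
    have h1 : (e / 2) ∈ Metric.ball (0 : ℝ) e := by
      rw [Metric.mem_ball, Real.dist_eq, sub_zero, abs_of_pos (by linarith)]; linarith
    have h2 := interior_subset (hb h1)
    simp only [Set.mem_ofPred_eq] at h2 ⊢
    have : 0 < (e / 2) * (a ^ 2 + b ^ 2) := by positivity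
    nlinarith
  · apply interior_maximal
    · intro p hp
      simp only [Set.mem_ofPred_eq] at hp ⊢
      exact le_of_lt hp
    · exact isOpen_lt continuous_const (by fun_prop)

lemma hull_eq (c N : ℝ) (hc : 0 < c) (hN : 0 < N) :
    convexHull ℝ {((0, 0) : ℝ × ℝ), (N, 0), (1, c)} =
      ({p | 0 ≤ 0 * p.1 + 1 * p.2 + 0} ∩ {p | 0 ≤ c * p.1 + (-1) * p.2 + 0}) ∩
        {p | 0 ≤ (-c) * p.1 + (-(N - 1)) * p.2 + c * N} := by
  apply Set.Subset.antisymm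
  · apply convexHull_min
    · intro p hp
      simp only [Set.mem_insert_iff, Set.mem_singleton_iff] at hp
      rcases hp with rfl | rfl | rfl <;> simp only [Set.mem_inter_iff, Set.mem_ofPred_eq] <;>
        refine ⟨⟨?_, ?_⟩, ?_⟩ <;> nlinarith [mul_pos hc hN]
    · have key : ∀ a b d : ℝ, Convex ℝ {p : ℝ × ℝ | 0 ≤ a * p.1 + b * p.2 + d} := by
        intro a b d x hx y hy s t hs ht hst
        simp only [Set.mem_ofPred_eq, Prod.fst_add, Prod.snd_add, Prod.smul_fst, Prod.smul_snd,
          smul_eq_mul] at hx hy ⊢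
        have : t = 1 - s := by linarith
        subst this
        nlinarith [mul_nonneg hs hx, mul_nonneg ht hy]
      exact ((key _ _ _).inter (key _ _ _)).inter (key _ _ _)
  · rintro ⟨x, y⟩ ⟨⟨h1, h2⟩, h3⟩
    simp only [Set.mem_ofPred_eq] at h1 h2 h3
    have hcv := convex_convexHull ℝ {((0, 0) : ℝ × ℝ), (N, 0), (1, c)}
    have := hcv.sum_mem (t := Finset.univ)
      (w := ![((-c) * x + (-(N - 1)) * y + c * N) / (c * N), (c * x - y) / (c * N), y / c])
      (z := ![((0, 0) : ℝ × ℝ), (N, 0), (1, c)]) ?_ ?_ ?_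
    · convert this using 1
      simp [Fin.sum_univ_three]
      constructor <;> field_simp
      ring
    · intro i _
      fin_cases i <;> simp <;> apply div_nonneg <;> first | positivity | linarith
    · simp [Fin.sum_univ_three]
      field_simp
      ring
    · intro i _
      apply subset_convexHull
      fin_cases i <;> simp

lemma interior_count (n : ℕ) (c : ℤ) (hn : c = n) (hc : 1 ≤ c) :
    (Set.ncard {z : ℤ × ℤ | (0 < z.2 ∧ 0 < c * z.1 - z.2) ∧
      0 < -c * z.1 - (2 * c ^ 2 + 2 * c - 1) * z.2 + c * (2 * c ^ 2 + 2 * c)} : ℤ) = c ^ 3 - c := by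
  have hset : {z : ℤ × ℤ | (0 < z.2 ∧ 0 < c * z.1 - z.2) ∧
      0 < -c * z.1 - (2 * c ^ 2 + 2 * c - 1) * z.2 + c * (2 * c ^ 2 + 2 * c)} =
      (((Finset.range n).sigma (fun j => Finset.range (2 * (n + 1) * j))).image
        (fun s => (((s.2 : ℤ) + 1, (n : ℤ) - s.1) : ℤ × ℤ)) : Finset (ℤ × ℤ)) := by
    ext ⟨x, y⟩
    simp only [Set.mem_ofPred_eq, Finset.coe_image, Set.mem_image, Finset.mem_coe, Finset.mem_sigma,
      Finset.mem_range, Sigma.exists, Prod.mk.injEq]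
    rw [← hn]
    constructor
    · rintro ⟨⟨h1, h2⟩, h3⟩
      have hyc : y < c := by
        by_contra hh
        push Not at hh
        nlinarith [mul_nonneg (by nlinarith : (0:ℤ) ≤ 2 * c ^ 2 + 2 * c) (sub_nonneg.2 hh)]
      have hx : 1 ≤ x := by
        by_contra hh
        nlinarith
      have hx2 : x ≤ 2 * (c + 1) * (c - y) := by
        by_contra hh
        push Not at hh
        have := mul_le_mul_of_nonneg_left (Int.add_one_le_iff.2 hh) (by linarith : (0:ℤ) ≤ c)
        nlinarith
      refine ⟨(c - y).toNat, (x - 1).toNat, ⟨by omega, ?_⟩, by omega, by omega⟩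
      zify
      rw [Int.toNat_of_nonneg (by omega), Int.toNat_of_nonneg (by omega), ← hn]
      linarith
    · rintro ⟨j, k, ⟨h1, h2⟩, rfl, rfl⟩
      zify at h1 h2
      rw [← hn] at h1 h2
      generalize (j : ℤ) = J at *
      have hk : (0 : ℤ) ≤ k := by positivity
      generalize (k : ℤ) = K at *
      have hJ : 0 < J := by
        by_contra hh
        nlinarith
      refine ⟨⟨by linarith, by nlinarith⟩, ?_⟩
      have := mul_le_mul_of_nonneg_left (Int.add_one_le_iff.2 h2) (by linarith : (0:ℤ) ≤ c)
      nlinarith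
  rw [hset, Set.ncard_coe_finset, Finset.card_image_of_injective, Finset.card_sigma]
  · simp only [Finset.card_range]
    subst hn
    clear hset hc
    have : ∀ m : ℕ, ((∑ j ∈ Finset.range m, 2 * (n + 1) * j : ℕ) : ℤ) = (n + 1) * (m * (m - 1)) := by
      intro m
      induction m with
      | zero => simp
      | succ m ih => rw [Finset.sum_range_succ]; push_cast at ih ⊢; rw [ih]; ring
    rw [this]; ring
  · rintro ⟨a, b⟩ ⟨a', b'⟩ h
    simp only [Prod.mk.injEq] at h
    obtain rfl : a = a' := by omega
    obtain rfl : b = b' := by omega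
    rfl

lemma boundary_count (c : ℤ) (hc : 1 ≤ c) :
    (Set.ncard {z : ℤ × ℤ | ((0 ≤ z.2 ∧ 0 ≤ c * z.1 - z.2) ∧
      0 ≤ -c * z.1 - (2 * c ^ 2 + 2 * c - 1) * z.2 + c * (2 * c ^ 2 + 2 * c)) ∧
      ¬ ((0 < z.2 ∧ 0 < c * z.1 - z.2) ∧
      0 < -c * z.1 - (2 * c ^ 2 + 2 * c - 1) * z.2 + c * (2 * c ^ 2 + 2 * c))} : ℤ)
      = 2 * c ^ 2 + 2 * c + 2 := by
  have hset : {z : ℤ × ℤ | ((0 ≤ z.2 ∧ 0 ≤ c * z.1 - z.2) ∧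
      0 ≤ -c * z.1 - (2 * c ^ 2 + 2 * c - 1) * z.2 + c * (2 * c ^ 2 + 2 * c)) ∧
      ¬ ((0 < z.2 ∧ 0 < c * z.1 - z.2) ∧
      0 < -c * z.1 - (2 * c ^ 2 + 2 * c - 1) * z.2 + c * (2 * c ^ 2 + 2 * c))} =
      (insert (1, c) ((Finset.Icc 0 (2 * c ^ 2 + 2 * c)).image (fun x : ℤ => ((x, 0) : ℤ × ℤ))) :
        Finset (ℤ × ℤ)) := by
    ext ⟨x, y⟩
    simp only [Set.mem_ofPred_eq, Finset.coe_insert, Finset.coe_image, Set.mem_insert_iff,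
      Set.mem_image, Finset.mem_coe, Finset.mem_Icc, Prod.mk.injEq]
    constructor
    · rintro ⟨⟨⟨h1, h2⟩, h3⟩, h4⟩
      rcases h1.eq_or_lt with h0 | h0
      · right
        subst h0
        refine ⟨x, ⟨?_, ?_⟩, rfl, rfl⟩
        · by_contra hh
          nlinarith
        · by_contra hh
          nlinarith
      · left
        have hyc : y ≤ c := by
          by_contra hh
          push Not at hh
          nlinarith [mul_pos (by nlinarith : (0:ℤ) < 2 * c ^ 2 + 2 * c) (sub_pos.2 hh)]
        have hd : c ∣ y := by
          rcases h2.eq_or_lt with h5 | h5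
          · exact ⟨x, by linarith⟩
          · rcases h3.eq_or_lt with h6 | h6
            · exact ⟨x + (2 * c + 2) * y - (2 * c ^ 2 + 2 * c), by linarith⟩
            · exact absurd ⟨⟨h0, h5⟩, h6⟩ h4
        have hy : y = c := le_antisymm hyc (Int.le_of_dvd h0 hd)
        subst hy
        refine ⟨?_, rfl⟩
        apply le_antisymm
        · by_contra hh
          nlinarith
        · by_contra hh
          nlinarith
    · rintro (⟨rfl, rfl⟩ | ⟨x, ⟨h1, h2⟩, rfl, rfl⟩)
      · exact ⟨⟨⟨by linarith, by linarith⟩, by nlinarith⟩, fun h => by linarith [h.1.2]⟩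
      · exact ⟨⟨⟨le_rfl, by nlinarith⟩, by nlinarith⟩, fun h => by linarith [h.1.1]⟩
  rw [hset, Set.ncard_coe_finset, Finset.card_insert_of_notMem, Finset.card_image_of_injective]
  · simp only [Int.card_Icc]
    push_cast
    rw [Int.toNat_of_nonneg (by nlinarith)]
    ring
  · intro a b h
    simpa using h
  · simp
    omega

lemma main_part (c : ℤ) (hc : 1 ≤ c) :
    (IsLatticeTriangle (convexHull ℝ {toR2 (0, 0), toR2 (2 * c ^ 2 + 2 * c, 0), toR2 (1, c)}) ∧
      (bcount (convexHull ℝ {toR2 (0, 0), toR2 (2 * c ^ 2 + 2 * c, 0), toR2 (1, c)}) : ℤ) =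
        2 * c ^ 2 + 2 * c + 2 ∧
      (icount (convexHull ℝ {toR2 (0, 0), toR2 (2 * c ^ 2 + 2 * c, 0), toR2 (1, c)}) : ℤ) =
        c ^ 3 - c) := by
  have hcR : (1 : ℝ) ≤ c := by exact_mod_cast hc
  have hN : (0 : ℝ) < 2 * (c : ℝ) ^ 2 + 2 * c := by positivity
  have hh : convexHull ℝ {toR2 (0, 0), toR2 (2 * c ^ 2 + 2 * c, 0), toR2 (1, c)} =
      ({p | 0 ≤ 0 * p.1 + 1 * p.2 + 0} ∩ {p | 0 ≤ (c : ℝ) * p.1 + (-1) * p.2 + 0}) ∩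
        {p | 0 ≤ (-(c : ℝ)) * p.1 + (-((2 * (c : ℝ) ^ 2 + 2 * c) - 1)) * p.2 +
          c * (2 * (c : ℝ) ^ 2 + 2 * c)} := by
    have := hull_eq c (2 * (c : ℝ) ^ 2 + 2 * c) (by linarith) hN
    simpa only [toR2, Int.cast_zero, Int.cast_one, Int.cast_add, Int.cast_mul, Int.cast_pow,
      Int.cast_ofNat] using this
  have hcl : IsClosed (convexHull ℝ {toR2 (0, 0), toR2 (2 * c ^ 2 + 2 * c, 0), toR2 (1, c)}) := by
    rw [hh]
    refine IsClosed.inter (IsClosed.inter ?_ ?_) ?_ <;>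
      exact isClosed_le continuous_const (by fun_prop)
  have hint : ∀ z : ℤ × ℤ, toR2 z ∈ interior (convexHull ℝ
      {toR2 (0, 0), toR2 (2 * c ^ 2 + 2 * c, 0), toR2 (1, c)}) ↔
      ((0 < z.2 ∧ 0 < c * z.1 - z.2) ∧
      0 < -c * z.1 - (2 * c ^ 2 + 2 * c - 1) * z.2 + c * (2 * c ^ 2 + 2 * c)) := by
    intro z
    rw [hh, interior_inter, interior_inter, interior_half _ _ _ (by norm_num),
      interior_half _ _ _ (by positivity), interior_half _ _ _ (by nlinarith [sq_nonneg (-((2 * (c : ℝ) ^ 2 + 2 * c) - 1))])]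
    simp only [Set.mem_inter_iff, Set.mem_ofPred_eq, toR2]
    rify
    ring_nf
  have hmem : ∀ z : ℤ × ℤ, toR2 z ∈ convexHull ℝ
      {toR2 (0, 0), toR2 (2 * c ^ 2 + 2 * c, 0), toR2 (1, c)} ↔
      ((0 ≤ z.2 ∧ 0 ≤ c * z.1 - z.2) ∧
      0 ≤ -c * z.1 - (2 * c ^ 2 + 2 * c - 1) * z.2 + c * (2 * c ^ 2 + 2 * c)) := by
    intro z
    rw [hh]
    simp only [Set.mem_inter_iff, Set.mem_ofPred_eq, toR2]
    rify
    ring_nf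
  refine ⟨⟨_, _, _, ?_, rfl⟩, ?_, ?_⟩
  · rw [affineIndependent_iff_not_collinear_set,
      collinear_iff_of_mem (p₀ := toR2 (0, 0)) (by simp)]
    rintro ⟨v, hv⟩
    obtain ⟨r, hr⟩ := hv (toR2 (2 * c ^ 2 + 2 * c, 0)) (by simp)
    obtain ⟨s, hs⟩ := hv (toR2 (1, c)) (by simp)
    simp [toR2, Prod.ext_iff] at hr hs
    obtain ⟨hr1, hr2⟩ := hr
    obtain ⟨hs1, hs2⟩ := hs
    rcases hr2 with h | h
    · rw [h] at hr1; linarith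
    · rw [h] at hs2; linarith
  · unfold bcount
    rw [← boundary_count c hc]
    simp only [hcl.frontier_eq, Set.mem_sdiff, hint, hmem]
  · unfold icount
    rw [← interior_count c.toNat c (by omega) hc]
    simp only [hint]

/-- For every integer `c ≥ 1`, the lattice triangle with vertices `(0,0)`, `(2c²+2c, 0)`,
`(1, c)` satisfies `b(T) = 2c²+2c+2` and `i(T) = c³−c`; in particular the apex
`(2c²+2c+2, c³−c)` of the closure of `σ_c°` is realized by a lattice triangle. -/
theorem apex_realized (c : ℤ) (hc : 1 ≤ c) :
    (IsLatticeTriangle (convexHull ℝ {toR2 (0, 0), toR2 (2 * c ^ 2 + 2 * c, 0), toR2 (1, c)}) ∧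
      (bcount (convexHull ℝ {toR2 (0, 0), toR2 (2 * c ^ 2 + 2 * c, 0), toR2 (1, c)}) : ℤ) =
        2 * c ^ 2 + 2 * c + 2 ∧
      (icount (convexHull ℝ {toR2 (0, 0), toR2 (2 * c ^ 2 + 2 * c, 0), toR2 (1, c)}) : ℤ) =
        c ^ 3 - c) ∧
    ∃ T : Set (ℝ × ℝ), IsLatticeTriangle T ∧
      (bcount T : ℤ) = 2 * c ^ 2 + 2 * c + 2 ∧ (icount T : ℤ) = c ^ 3 - c := by
  exact ⟨main_part c hc, _, main_part c hc⟩
end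

section
/- For all integers c ≥ 1 and k ≥ 2c + 1, the lattice triangle T with vertices (0,0), ((k−2)(c+1), 0), (0, c+1) satisfies b(T) = k(c+1) and i(T) = k·c·(c+1)/2 − c(c+2). In particular, the pair (k(c+1), kc(c+1)/2 − c(c+2)) is realized by a lattice triangle for every k ≥ 2c+1. -/
open MeasureTheory

/-- The triangle as an intersection of three half planes. -/
lemma tri_hull (m n : ℤ) (hm : 1 ≤ m) (hn : 1 ≤ n) :
    convexHull ℝ {toR2 (0, 0), toR2 (m * n, 0), toR2 (0, n)} =
      {p : ℝ × ℝ | 0 ≤ p.1} ∩ {p | 0 ≤ p.2} ∩ {p | p.1 + m * p.2 ≤ m * n} := by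
  have hm' : (1 : ℝ) ≤ m := by exact_mod_cast hm
  have hn' : (1 : ℝ) ≤ n := by exact_mod_cast hn
  have hmn : (0 : ℝ) < m * n := by positivity
  apply Set.Subset.antisymm
  · apply convexHull_min
    · intro p hp
      simp only [Set.mem_insert_iff, Set.mem_singleton_iff] at hp
      rcases hp with rfl | rfl | rfl <;> simp [toR2] <;> first | omega | positivity
    · intro p hp q hq a b ha hb hab
      simp only [Set.mem_inter_iff, Set.mem_ofPred_eq, Prod.fst_add, Prod.snd_add, Prod.smul_fst,
        Prod.smul_snd, smul_eq_mul] at *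
      obtain ⟨⟨h1, h2⟩, h3⟩ := hp
      obtain ⟨⟨g1, g2⟩, g3⟩ := hq
      refine ⟨⟨by positivity, by positivity⟩, ?_⟩
      have e1 := mul_le_mul_of_nonneg_left h3 ha
      have e2 := mul_le_mul_of_nonneg_left g3 hb
      have e3 : (m * n : ℝ) = a * (m * n) + b * (m * n) := by rw [← add_mul, hab, one_mul]
      rw [e3]
      linarith
  · rintro ⟨x, y⟩ ⟨⟨h1, h2⟩, h3⟩
    simp only [Set.mem_ofPred_eq] at h1 h2 h3
    refine mem_convexHull_of_exists_fintype
      ![1 - x / (m * n) - y / n, x / (m * n), y / n]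
      ![toR2 (0, 0), toR2 (m * n, 0), toR2 (0, n)] ?_ ?_ ?_ ?_
    · intro i
      fin_cases i
      · have : 1 - x / (m * n) - y / n = (m * n - (x + m * y)) / (m * n) := by
          field_simp
          ring
        simp only [Fin.zero_eta, Matrix.cons_val_zero]
        rw [this]
        apply div_nonneg <;> linarith
      · simp only [Fin.mk_one, Matrix.cons_val_one, Matrix.cons_val_zero]
        positivity
      · simp only [Fin.reduceFinMk, Matrix.cons_val]
        positivity
    · simp [Fin.sum_univ_three]
      ring
    · intro i
      fin_cases i <;> simp
    · simp only [Fin.sum_univ_three, Matrix.cons_val_zero, Matrix.cons_val_one, Matrix.cons_val,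
        toR2]
      ext
      · simp
        field_simp
      · simp
        field_simp

lemma tri_interior (m n : ℝ) :
    interior ({p : ℝ × ℝ | 0 ≤ p.1} ∩ {p | 0 ≤ p.2} ∩ {p | p.1 + m * p.2 ≤ m * n}) =
      {p : ℝ × ℝ | 0 < p.1} ∩ {p | 0 < p.2} ∩ {p | p.1 + m * p.2 < m * n} := by
  rw [interior_inter, interior_inter]
  congr 1
  · congr 1
    · have := isOpenMap_fst.preimage_interior_eq_interior_preimage
        (continuous_fst (X := ℝ) (Y := ℝ)) (Set.Ici 0)
      rw [interior_Ici] at this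
      exact this.symm
    · have := isOpenMap_snd.preimage_interior_eq_interior_preimage
        (continuous_snd (X := ℝ) (Y := ℝ)) (Set.Ici 0)
      rw [interior_Ici] at this
      exact this.symm
  · let f : ℝ × ℝ →L[ℝ] ℝ := ContinuousLinearMap.fst ℝ ℝ ℝ + m • ContinuousLinearMap.snd ℝ ℝ ℝ
    have hf : Function.Surjective f := fun x => ⟨(x, 0), by simp [f]⟩
    have := (f.isOpenMap hf).preimage_interior_eq_interior_preimage f.continuous (Set.Iic (m * n))
    rw [interior_Iic] at this
    exact this.symm

lemma tri_closed (m n : ℝ) :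
    IsClosed ({p : ℝ × ℝ | 0 ≤ p.1} ∩ {p | 0 ≤ p.2} ∩ {p | p.1 + m * p.2 ≤ m * n}) := by
  refine ((isClosed_le ?_ ?_).inter (isClosed_le ?_ ?_)).inter (isClosed_le ?_ ?_) <;> fun_prop

lemma sum_aux (m : ℤ) (N : ℕ) :
    2 * ∑ j ∈ Finset.range N, (m * (j + 1) - 1) = m * N * (N + 1) - 2 * N := by
  induction N with
  | zero => simp
  | succ N ih =>
    rw [Finset.sum_range_succ, mul_add, ih]
    push_cast
    ring

lemma tri_icount (m : ℤ) (N : ℕ) (hm : 1 ≤ m) :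
    2 * (icount (convexHull ℝ {toR2 (0, 0), toR2 (m * (N + 1), 0), toR2 (0, (N : ℤ) + 1)}) : ℤ) =
      m * N * (N + 1) - 2 * N := by
  rw [icount, tri_hull m (N + 1) hm (by omega), tri_interior]
  let F : Finset (Σ _ : ℕ, ℤ) :=
    (Finset.range N).sigma (fun j => Finset.Ioo (0 : ℤ) (m * (j + 1)))
  let g : (Σ _ : ℕ, ℤ) → ℤ × ℤ := fun s => (s.2, N - s.1)
  have hg : Function.Injective g := by
    rintro ⟨a, b⟩ ⟨c, d⟩ h
    simp only [g, Prod.mk.injEq] at h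
    obtain ⟨rfl, h⟩ := h
    have : a = c := by omega
    subst this
    rfl
  have hs : {z : ℤ × ℤ | toR2 z ∈ {p : ℝ × ℝ | 0 < p.1} ∩ {p | 0 < p.2} ∩
      {p | p.1 + (m : ℝ) * p.2 < m * ((N + 1 : ℤ) : ℝ)}} = g '' (F : Set _) := by
    ext ⟨x, y⟩
    simp only [toR2, Set.mem_inter_iff, Set.mem_ofPred_eq, Set.mem_image, Finset.mem_coe]
    norm_cast
    constructor
    · rintro ⟨⟨h1, h2⟩, h3⟩
      have hy : y < N + 1 := by
        by_contra hh
        push Not at hh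
        push_cast at h3
        nlinarith
      refine ⟨⟨(N - y).toNat, x⟩, ?_, ?_⟩
      · have e : (((N - y).toNat : ℕ) : ℤ) = N - y := Int.toNat_of_nonneg (by omega)
        simp only [F, Finset.mem_sigma, Finset.mem_range, Finset.mem_Ioo, e]
        push_cast at h3
        refine ⟨by omega, h1, by linarith⟩
      · simp only [g, Prod.mk.injEq, true_and]
        omega
    · rintro ⟨⟨j, x'⟩, hF, hE⟩
      simp only [F, Finset.mem_sigma, Finset.mem_range, Finset.mem_Ioo] at hF
      simp only [g, Prod.mk.injEq] at hE
      obtain ⟨rfl, rfl⟩ := hE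
      obtain ⟨a1, a2, a3⟩ := hF
      refine ⟨⟨a2, by omega⟩, ?_⟩
      push_cast
      linarith
  rw [hs, Set.ncard_image_of_injective _ hg, Set.ncard_coe_finset, Finset.card_sigma,
    ← sum_aux]
  congr 1
  push_cast
  apply Finset.sum_congr rfl
  intro j _
  rw [Int.card_Ioo, Int.toNat_of_nonneg]
  · ring
  · nlinarith [Int.natCast_nonneg j]

lemma tri_bcount (m n : ℤ) (hm : 1 ≤ m) (hn : 1 ≤ n) :
    (bcount (convexHull ℝ {toR2 (0, 0), toR2 (m * n, 0), toR2 (0, n)}) : ℤ) = (m + 2) * n := by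
  rw [bcount, tri_hull m n hm hn, (tri_closed _ _).frontier_eq, tri_interior]
  have i1 : Function.Injective (fun y : ℤ => ((0 : ℤ), y)) := fun a b h => (Prod.mk.inj h).2
  have i2 : Function.Injective (fun x : ℤ => (x, (0 : ℤ))) := fun a b h => (Prod.mk.inj h).1
  have i3 : Function.Injective (fun y : ℤ => (m * (n - y), y)) := fun a b h => (Prod.mk.inj h).2
  let A : Finset (ℤ × ℤ) := (Finset.Icc 0 n).image (fun y => (0, y))
  let B : Finset (ℤ × ℤ) := (Finset.Ioc 0 (m * n)).image (fun x => (x, 0))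
  let C : Finset (ℤ × ℤ) := (Finset.Ioo 0 n).image (fun y => (m * (n - y), y))
  have hmn : 0 < m * n := by positivity
  have hAB : Disjoint A B := by
    rw [Finset.disjoint_left]
    rintro ⟨x, y⟩ h1 h2
    simp only [A, B, Finset.mem_image, Finset.mem_Icc, Finset.mem_Ioc, Prod.mk.injEq] at h1 h2
    grind
  have hABC : Disjoint (A ∪ B) C := by
    rw [Finset.disjoint_left]
    rintro ⟨x, y⟩ h1 h2
    simp only [A, B, C, Finset.mem_union, Finset.mem_image, Finset.mem_Icc, Finset.mem_Ioc,
      Finset.mem_Ioo, Prod.mk.injEq] at h1 h2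
    obtain ⟨t, ⟨t1, t2⟩, rfl, rfl⟩ := h2
    have : 0 < m * (n - t) := mul_pos (by omega) (by omega)
    rcases h1 with ⟨s, hs, h, _⟩ | ⟨s, hs, _, h⟩ <;> omega
  have hs : {z : ℤ × ℤ | toR2 z ∈
      ({p : ℝ × ℝ | 0 ≤ p.1} ∩ {p | 0 ≤ p.2} ∩ {p | p.1 + (m : ℝ) * p.2 ≤ m * n}) \
      ({p : ℝ × ℝ | 0 < p.1} ∩ {p | 0 < p.2} ∩ {p | p.1 + (m : ℝ) * p.2 < m * n})} =
      ((A ∪ B ∪ C : Finset (ℤ × ℤ)) : Set (ℤ × ℤ)) := by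
    ext ⟨x, y⟩
    simp only [toR2, Set.mem_sdiff, Set.mem_inter_iff, Set.mem_ofPred_eq, Finset.mem_coe, A, B, C,
      Finset.mem_union, Finset.mem_image, Finset.mem_Icc, Finset.mem_Ioc,
      Finset.mem_Ioo, Prod.mk.injEq]
    norm_cast
    constructor
    · rintro ⟨⟨⟨h1, h2⟩, h3⟩, h4⟩
      have hy : y ≤ n := by
        by_contra hh
        push Not at hh
        nlinarith
      by_cases hx0 : x = 0
      · exact Or.inl (Or.inl ⟨y, ⟨h2, hy⟩, hx0.symm, rfl⟩)
      by_cases hy0 : y = 0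
      · subst hy0
        exact Or.inl (Or.inr ⟨x, ⟨by omega, by linarith⟩, rfl, rfl⟩)
      · have h5 : x + m * y = m * n := by
          by_contra hh
          exact h4 ⟨⟨by omega, by omega⟩, lt_of_le_of_ne h3 hh⟩
        refine Or.inr ⟨y, ⟨by omega, lt_of_le_of_ne hy ?_⟩, by linarith, rfl⟩
        rintro rfl
        omega
    · rintro ((⟨s, ⟨s1, s2⟩, rfl, rfl⟩ | ⟨s, ⟨s1, s2⟩, rfl, rfl⟩) | ⟨s, ⟨s1, s2⟩, rfl, rfl⟩)
      · exact ⟨⟨⟨le_rfl, s1⟩, by nlinarith⟩, by simp⟩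
      · exact ⟨⟨⟨s1.le, le_rfl⟩, by linarith⟩, by simp⟩
      · refine ⟨⟨⟨mul_nonneg (by omega) (by omega), s1.le⟩, by linarith⟩, ?_⟩
        rintro ⟨_, h⟩
        linarith
  rw [hs, Set.ncard_coe_finset, Finset.card_union_of_disjoint hABC,
    Finset.card_union_of_disjoint hAB, Finset.card_image_of_injective _ i1,
    Finset.card_image_of_injective _ i2, Finset.card_image_of_injective _ i3,
    Int.card_Icc, Int.card_Ioc, Int.card_Ioo]
  push_cast
  rw [Int.toNat_of_nonneg (by omega), Int.toNat_of_nonneg (by omega),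
    Int.toNat_of_nonneg (by omega)]
  ring

lemma tri_lattice (m n : ℤ) (hm : 1 ≤ m) (hn : 1 ≤ n) :
    IsLatticeTriangle (convexHull ℝ {toR2 (0, 0), toR2 (m * n, 0), toR2 (0, n)}) := by
  refine ⟨_, _, _, ?_, rfl⟩
  have hm' : (m : ℝ) ≠ 0 := by exact_mod_cast (by omega : m ≠ 0)
  have hn' : (n : ℝ) ≠ 0 := by exact_mod_cast (by omega : n ≠ 0)
  rw [affineIndependent_iff_of_fintype]
  intro w h0 h1 i
  rw [Finset.weightedVSub_eq_linear_combination _ h0] at h1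
  simp only [Fin.sum_univ_three, toR2, Matrix.cons_val_zero, Matrix.cons_val_one,
    Matrix.cons_val] at h0 h1
  have e1 := congrArg Prod.fst h1
  have e2 := congrArg Prod.snd h1
  simp [hm', hn'] at e1 e2
  rw [e1, e2] at h0
  fin_cases i
  · simpa using h0
  · exact e1
  · exact e2

/-- For integers `c ≥ 1` and `k ≥ 2c+1`, the lattice triangle with vertices `(0,0)`,
`((k−2)(c+1), 0)`, `(0, c+1)` satisfies `b(T) = k(c+1)` and `i(T) = kc(c+1)/2 − c(c+2)`;
in particular the pair `(k(c+1), kc(c+1)/2 − c(c+2))` is realized by a lattice triangle. -/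
theorem upper_face_realized (c k : ℤ) (hc : 1 ≤ c) (hk : 2 * c + 1 ≤ k) :
    (IsLatticeTriangle
        (convexHull ℝ {toR2 (0, 0), toR2 ((k - 2) * (c + 1), 0), toR2 (0, c + 1)}) ∧
      (bcount (convexHull ℝ {toR2 (0, 0), toR2 ((k - 2) * (c + 1), 0), toR2 (0, c + 1)}) : ℤ)
        = k * (c + 1) ∧
      (icount (convexHull ℝ {toR2 (0, 0), toR2 ((k - 2) * (c + 1), 0), toR2 (0, c + 1)}) : ℤ)
        = k * c * (c + 1) / 2 - c * (c + 2)) ∧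
    ∃ T : Set (ℝ × ℝ), IsLatticeTriangle T ∧
      (bcount T : ℤ) = k * (c + 1) ∧ (icount T : ℤ) = k * c * (c + 1) / 2 - c * (c + 2) := by
  
  have hT := tri_lattice (k - 2) (c + 1) (by omega) (by omega)
  have hB := tri_bcount (k - 2) (c + 1) (by omega) (by omega)
  have hI : (icount (convexHull ℝ {toR2 (0, 0), toR2 ((k - 2) * (c + 1), 0),
      toR2 (0, c + 1)}) : ℤ) = k * c * (c + 1) / 2 - c * (c + 2) := by
    obtain ⟨N, rfl⟩ := Int.eq_ofNat_of_zero_le (by omega : 0 ≤ c)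
    have h := tri_icount (k - 2) N (by omega)
    have e : k * (N : ℤ) * (N + 1) = 2 * ((icount (convexHull ℝ {toR2 (0, 0),
        toR2 ((k - 2) * (N + 1), 0), toR2 (0, (N : ℤ) + 1)}) : ℤ) + N * (N + 2)) := by
      linarith
    rw [e, Int.mul_ediv_cancel_left _ (by norm_num)]
    ring
  rw [sub_add_cancel] at hB
  exact ⟨⟨hT, hB, hI⟩, _, hT, hB, hI⟩
end

section
/- Let p be an odd prime. If T is a lattice triangle whose normalized volume equals p (i.e., its area a(T) satisfies 2·a(T) = p), then (b(T), i(T)) = (3, (p−1)/2) or (b(T), i(T)) = (p+2, 0); conversely, both pairs are realized by lattice triangles of normalized volume p. Equivalently, the set of pairs (b(T), i(T)) over lattice triangles T intersected with the line {(b, i) : i = −b/2 + p/2 + 1} equals {(3, (p−1)/2), (p+2, 0)}. -/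
open MeasureTheory

/-- standard triangle -/
def stdTri : Set (ℝ × ℝ) := {q | 0 ≤ q.1 ∧ 0 ≤ q.2 ∧ q.1 + q.2 ≤ 1}

lemma isClosed_stdTri : IsClosed stdTri := by
  unfold stdTri
  exact (isClosed_le continuous_const continuous_fst).inter
    ((isClosed_le continuous_const continuous_snd).inter
      (isClosed_le (continuous_fst.add continuous_snd) continuous_const))

lemma interior_stdTri : interior stdTri = {q | 0 < q.1 ∧ 0 < q.2 ∧ q.1 + q.2 < 1} := by
  apply subset_antisymm
  · have key : ∀ (f : (ℝ × ℝ) →L[ℝ] ℝ), Function.Surjective f → ∀ s : Set ℝ, (∀ q ∈ stdTri, f q ∈ s) →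
        ∀ q ∈ interior stdTri, f q ∈ interior s := by
      intro f hf s hs q hq
      have h1 := (f.isOpenMap hf).image_interior_subset stdTri ⟨q, hq, rfl⟩
      exact interior_mono (by rintro _ ⟨x, hx, rfl⟩; exact hs x hx) h1
    intro q hq
    have h1 := key (ContinuousLinearMap.fst ℝ ℝ ℝ) Prod.fst_surjective (Set.Ici 0) (fun q hq => hq.1) q hq
    have h2 := key (ContinuousLinearMap.snd ℝ ℝ ℝ) Prod.snd_surjective (Set.Ici 0) (fun q hq => hq.2.1) q hq
    have h3 := key (ContinuousLinearMap.fst ℝ ℝ ℝ + ContinuousLinearMap.snd ℝ ℝ ℝ) (fun x => ⟨(x, 0), by simp⟩) (Set.Iic 1) (fun q hq => hq.2.2) q hq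
    rw [interior_Ici] at h1 h2
    rw [interior_Iic] at h3
    exact ⟨h1, h2, h3⟩
  · apply interior_maximal
    · rintro q ⟨h1, h2, h3⟩
      exact ⟨h1.le, h2.le, h3.le⟩
    · exact (isOpen_lt continuous_const continuous_fst).inter
        ((isOpen_lt continuous_const continuous_snd).inter
          (isOpen_lt (continuous_fst.add continuous_snd) continuous_const))

lemma volume_stdTri : volume stdTri = ENNReal.ofReal (1/2) := by
  rw [Measure.volume_eq_prod, Measure.prod_apply isClosed_stdTri.measurableSet]
  have h : ∀ x : ℝ, volume (Prod.mk x ⁻¹' stdTri) = (Set.Icc (0:ℝ) 1).indicator (fun x => ENNReal.ofReal (1 - x)) x := by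
    intro x
    by_cases hx : x ∈ Set.Icc (0:ℝ) 1
    · rw [Set.indicator_of_mem hx]
      have : Prod.mk x ⁻¹' stdTri = Set.Icc 0 (1 - x) := by
        ext y
        simp only [stdTri, Set.mem_preimage, Set.mem_ofPred_eq, Set.mem_Icc]
        constructor
        · rintro ⟨_, h2, h3⟩; exact ⟨h2, by linarith⟩
        · rintro ⟨h2, h3⟩; exact ⟨hx.1, h2, by linarith⟩
      rw [this, Real.volume_Icc, sub_zero]
    · rw [Set.indicator_of_notMem hx]
      have : Prod.mk x ⁻¹' stdTri = ∅ := by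
        ext y
        simp only [stdTri, Set.mem_preimage, Set.mem_ofPred_eq, Set.mem_empty_iff_false, iff_false]
        rintro ⟨h1, h2, h3⟩
        exact hx ⟨h1, by linarith⟩
      rw [this, measure_empty]
  simp_rw [h]
  rw [lintegral_indicator measurableSet_Icc, ← ofReal_integral_eq_lintegral_ofReal]
  · congr 1
    rw [integral_Icc_eq_integral_Ioc, ← intervalIntegral.integral_of_le zero_le_one]
    rw [intervalIntegral.integral_sub (by simp) (by simp), integral_id]
    norm_num
  · exact (by fun_prop : Continuous fun x : ℝ => 1 - x).continuousOn.integrableOn_Icc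
  · filter_upwards [ae_restrict_mem measurableSet_Icc] with x hx
    simpa using hx.2

/-- the linear map with columns u, w -/
noncomputable def colMap (u1 u2 w1 w2 : ℝ) : (ℝ × ℝ) →ₗ[ℝ] (ℝ × ℝ) where
  toFun q := (q.1 * u1 + q.2 * w1, q.1 * u2 + q.2 * w2)
  map_add' := by intro x y; ext <;> simp <;> ring
  map_smul' := by intro x y; ext <;> simp <;> ring

lemma det_colMap (u1 u2 w1 w2 : ℝ) : LinearMap.det (colMap u1 u2 w1 w2) = u1 * w2 - u2 * w1 := by
  rw [← LinearMap.det_toMatrix (Module.Basis.finTwoProd ℝ), Matrix.det_fin_two]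
  simp [LinearMap.toMatrix_apply, colMap]
  ring

lemma hull_eq_s10 (v u w : ℝ × ℝ) :
    convexHull ℝ {v, v + u, v + w} = (fun q => v + q) '' (colMap u.1 u.2 w.1 w.2 '' stdTri) := by
  have hc : Convex ℝ stdTri := by
    rintro x ⟨h1, h2, h3⟩ y ⟨k1, k2, k3⟩ a b ha hb hab
    refine ⟨?_, ?_, ?_⟩ <;> simp only [Prod.fst_add, Prod.snd_add, Prod.smul_fst, Prod.smul_snd, smul_eq_mul]
    · positivity
    · positivity
    · nlinarith
  apply subset_antisymm
  · apply convexHull_min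
    · have e : ∀ q ∈ stdTri, v + colMap u.1 u.2 w.1 w.2 q ∈ (fun q => v + q) '' (colMap u.1 u.2 w.1 w.2 '' stdTri) :=
        fun q hq => ⟨_, ⟨q, hq, rfl⟩, rfl⟩
      rintro x (rfl | rfl | rfl)
      · convert e (0, 0) (by simp [stdTri]) using 1
        ext <;> simp [colMap]
      · convert e (1, 0) (by simp [stdTri]) using 1
        ext <;> simp [colMap]
      · convert e (0, 1) (by simp [stdTri]) using 1
        ext <;> simp [colMap]
    · exact (hc.linear_image _).translate v
  · rintro _ ⟨_, ⟨q, ⟨h1, h2, h3⟩, rfl⟩, rfl⟩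
    have hs := convex_convexHull ℝ ({v, v + u, v + w} : Set (ℝ × ℝ))
    have m := subset_convexHull ℝ ({v, v + u, v + w} : Set (ℝ × ℝ))
    have := hs.sum_mem (t := Finset.univ) (w := ![1 - q.1 - q.2, q.1, q.2]) (z := ![v, v + u, v + w])
      (by intro i _; fin_cases i <;> simp <;> linarith)
      (by simp [Fin.sum_univ_three]; ring) (by intro i _; apply m; fin_cases i <;> simp)
    convert this using 1
    ext <;> simp [Fin.sum_univ_three, colMap] <;> ring

/-- real barycentric description -/
lemma mem_image_iff (v u w z : ℝ × ℝ) (D : ℝ) (hD : u.1 * w.2 - u.2 * w.1 = D) (hpos : 0 < D) (s : Set (ℝ × ℝ)) :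
    z ∈ (fun q => v + q) '' (colMap u.1 u.2 w.1 w.2 '' s) ↔
     ((((z.1 - v.1) * w.2 - (z.2 - v.2) * w.1) / D, (u.1 * (z.2 - v.2) - u.2 * (z.1 - v.1)) / D) : ℝ × ℝ) ∈ s := by
  have hne : D ≠ 0 := hpos.ne'
  constructor
  · rintro ⟨_, ⟨q, hq, rfl⟩, rfl⟩
    convert hq using 1
    subst hD
    ext <;> simp only [colMap, LinearMap.coe_mk, AddHom.coe_mk, Prod.fst_add, Prod.snd_add] <;> rw [div_eq_iff hne] <;> ring
  · intro h
    refine ⟨_, ⟨_, h, rfl⟩, ?_⟩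
    ext <;> simp only [colMap, LinearMap.coe_mk, AddHom.coe_mk, Prod.fst_add, Prod.snd_add] <;>
      field_simp <;> rw [← hD] <;> ring

lemma interior_image (v u w : ℝ × ℝ) (D : ℝ) (hD : u.1 * w.2 - u.2 * w.1 = D) (hpos : 0 < D) (s : Set (ℝ × ℝ)) :
    interior ((fun q => v + q) '' (colMap u.1 u.2 w.1 w.2 '' s)) =
      (fun q => v + q) '' (colMap u.1 u.2 w.1 w.2 '' interior s) := by
  have hdet : LinearMap.det (colMap u.1 u.2 w.1 w.2) ≠ 0 := by
    rw [det_colMap, hD]; exact hpos.ne'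
  let e := (LinearEquiv.ofIsUnitDet (f := colMap u.1 u.2 w.1 w.2) (v := Module.Basis.finTwoProd ℝ) (v' := Module.Basis.finTwoProd ℝ)
    (by rw [LinearMap.det_toMatrix]; exact hdet.isUnit)).toContinuousLinearEquiv.toHomeomorph
  have he : ∀ t, colMap u.1 u.2 w.1 w.2 '' t = e '' t := fun t => rfl
  rw [he, he, e.image_interior]
  exact ((Homeomorph.addLeft v).image_interior _).symm

lemma volume_image (v u w : ℝ × ℝ) :
    volume ((fun q => v + q) '' (colMap u.1 u.2 w.1 w.2 '' stdTri)) = ENNReal.ofReal (|u.1 * w.2 - u.2 * w.1| / 2) := by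
  have : volume ((fun q => v + q) '' (colMap u.1 u.2 w.1 w.2 '' stdTri)) = volume (colMap u.1 u.2 w.1 w.2 '' stdTri) := by
    simp
  rw [this, Measure.addHaar_image_linearMap, det_colMap, volume_stdTri, ← ENNReal.ofReal_mul (abs_nonneg _)]
  congr 1
  ring

/-- integer determinant -/
def tdet (v0 v1 v2 : ℤ × ℤ) : ℤ := (v1.1 - v0.1) * (v2.2 - v0.2) - (v1.2 - v0.2) * (v2.1 - v0.1)

lemma tri_eq (v0 v1 v2 : ℤ × ℤ) : convexHull ℝ {toR2 v0, toR2 v1, toR2 v2} =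
    (fun q => toR2 v0 + q) '' (colMap (toR2 v1 - toR2 v0).1 (toR2 v1 - toR2 v0).2 (toR2 v2 - toR2 v0).1 (toR2 v2 - toR2 v0).2 '' stdTri) := by
  rw [← hull_eq_s10]; simp

lemma area_tri (v0 v1 v2 : ℤ × ℤ) : 2 * area (convexHull ℝ {toR2 v0, toR2 v1, toR2 v2}) = ((|tdet v0 v1 v2| : ℤ) : ℝ) := by
  rw [area, tri_eq, volume_image, ENNReal.toReal_ofReal (by positivity)]
  simp [tdet, toR2]
  ring

lemma sdet (v0 v1 v2 : ℤ × ℤ) : (toR2 v1 - toR2 v0).1 * (toR2 v2 - toR2 v0).2 - (toR2 v1 - toR2 v0).2 * (toR2 v2 - toR2 v0).1 = (tdet v0 v1 v2 : ℝ) := by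
  simp [tdet, toR2]

lemma mem_interior_tri (v0 v1 v2 z : ℤ × ℤ) (h : 0 < tdet v0 v1 v2) :
    toR2 z ∈ interior (convexHull ℝ {toR2 v0, toR2 v1, toR2 v2}) ↔
      0 < tdet v0 z v2 ∧ 0 < tdet v0 v1 z ∧ tdet v0 z v2 + tdet v0 v1 z < tdet v0 v1 v2 := by
  have hp : (0:ℝ) < tdet v0 v1 v2 := by exact_mod_cast h
  rw [tri_eq, interior_image _ _ _ _ (sdet v0 v1 v2) hp, mem_image_iff _ _ _ _ _ (sdet v0 v1 v2) hp, interior_stdTri]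
  simp only [Set.mem_ofPred_eq]
  rw [← add_div, div_lt_one hp, div_pos_iff_of_pos_right hp, div_pos_iff_of_pos_right hp,
    ← Int.cast_pos (R := ℝ), ← Int.cast_pos (R := ℝ), ← Int.cast_lt (R := ℝ)]
  simp [tdet, toR2]

lemma mem_tri (v0 v1 v2 z : ℤ × ℤ) (h : 0 < tdet v0 v1 v2) :
    toR2 z ∈ (convexHull ℝ {toR2 v0, toR2 v1, toR2 v2}) ↔
      0 ≤ tdet v0 z v2 ∧ 0 ≤ tdet v0 v1 z ∧ tdet v0 z v2 + tdet v0 v1 z ≤ tdet v0 v1 v2 := by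
  have hp : (0:ℝ) < tdet v0 v1 v2 := by exact_mod_cast h
  rw [tri_eq, mem_image_iff _ _ _ _ _ (sdet v0 v1 v2) hp, stdTri]
  simp only [Set.mem_ofPred_eq]
  rw [← add_div, div_le_one hp, le_div_iff₀ hp, le_div_iff₀ hp, zero_mul,
    ← Int.cast_nonneg_iff (R := ℝ), ← Int.cast_nonneg_iff (R := ℝ), ← Int.cast_le (R := ℝ)]
  simp [tdet, toR2]

lemma mem_frontier_tri (v0 v1 v2 z : ℤ × ℤ) (h : 0 < tdet v0 v1 v2) :
    toR2 z ∈ frontier (convexHull ℝ {toR2 v0, toR2 v1, toR2 v2}) ↔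
      (0 ≤ tdet v0 z v2 ∧ 0 ≤ tdet v0 v1 z ∧ tdet v0 z v2 + tdet v0 v1 z ≤ tdet v0 v1 v2) ∧
      ¬ (0 < tdet v0 z v2 ∧ 0 < tdet v0 v1 z ∧ tdet v0 z v2 + tdet v0 v1 z < tdet v0 v1 v2) := by
  have : IsClosed (convexHull ℝ {toR2 v0, toR2 v1, toR2 v2}) :=
    (Set.Finite.isCompact_convexHull ℝ (Set.toFinite _)).isClosed
  rw [this.frontier_eq, Set.mem_sdiff, mem_tri _ _ _ _ h, mem_interior_tri _ _ _ _ h]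

lemma affInd (v0 v1 v2 : ℤ × ℤ) (h : tdet v0 v1 v2 ≠ 0) : AffineIndependent ℝ ![toR2 v0, toR2 v1, toR2 v2] := by
  rw [affineIndependent_iff_of_fintype]
  intro w hw hs
  rw [Finset.weightedVSub_eq_linear_combination _ hw] at hs
  have hD : (tdet v0 v1 v2 : ℝ) ≠ 0 := by exact_mod_cast h
  simp only [Fin.sum_univ_three, Matrix.cons_val_zero, Matrix.cons_val_one, Matrix.cons_val] at hw hs
  have e1 := congrArg Prod.fst hs
  have e2 := congrArg Prod.snd hs
  simp only [toR2, Prod.fst_add, Prod.snd_add, Prod.smul_fst, Prod.smul_snd, smul_eq_mul, Prod.fst_zero, Prod.snd_zero] at e1 e2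
  have k1 : w 1 = 0 := by
    apply mul_left_cancel₀ hD
    simp only [tdet]
    push_cast
    linear_combination (v2.2 - v0.2 : ℝ) * (e1 - v0.1 * hw) - (v2.1 - v0.1 : ℝ) * (e2 - v0.2 * hw)
  have k2 : w 2 = 0 := by
    apply mul_left_cancel₀ hD
    simp only [tdet]
    push_cast
    linear_combination (v1.1 - v0.1 : ℝ) * (e2 - v0.2 * hw) - (v1.2 - v0.2 : ℝ) * (e1 - v0.1 * hw)
  intro i
  fin_cases i
  · simp only [Fin.zero_eta]; linarith
  · exact k1
  · exact k2

/-- points -/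
lemma ncard_pts (p : ℤ) (v0 v1 v2 : ℤ × ℤ) (hp : Prime p) (hd : tdet v0 v1 v2 = p) (hp0 : 0 < p) (c d : ℤ)
    (hcd : (c = v1.1 - v0.1 ∧ d = v2.1 - v0.1) ∨ (c = v1.2 - v0.2 ∧ d = v2.2 - v0.2))
    (hnd : ¬ (p ∣ c ∧ p ∣ d)) (P : ℤ → ℤ → Prop) :
    Set.ncard {z : ℤ × ℤ | P (tdet v0 z v2) (tdet v0 v1 z)} = Set.ncard {q : ℤ × ℤ | p ∣ c * q.1 + d * q.2 ∧ P q.1 q.2} := by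
  have hinj : Function.Injective (fun z : ℤ × ℤ => (tdet v0 z v2, tdet v0 v1 z)) := by
    intro x y h
    simp only [Prod.mk.injEq] at h
    obtain ⟨h1, h2⟩ := h
    unfold tdet at *
    ext
    · apply mul_left_cancel₀ hp0.ne'
      rw [← hd]
      linear_combination (v1.1 - v0.1) * h1 + (v2.1 - v0.1) * h2
    · apply mul_left_cancel₀ hp0.ne'
      rw [← hd]
      linear_combination (v1.2 - v0.2) * h1 + (v2.2 - v0.2) * h2
  rw [← Set.ncard_image_of_injective _ hinj]
  congr 1
  ext ⟨a, b⟩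
  simp only [Set.mem_image, Set.mem_ofPred_eq, Prod.mk.injEq]
  constructor
  · rintro ⟨z, hz, rfl, rfl⟩
    refine ⟨?_, hz⟩
    unfold tdet at *
    rcases hcd with ⟨rfl, rfl⟩ | ⟨rfl, rfl⟩
    · exact ⟨z.1 - v0.1, by rw [← hd]; ring⟩
    · exact ⟨z.2 - v0.2, by rw [← hd]; ring⟩
  · rintro ⟨h, hP⟩
    have h12 : p ∣ (v1.1 - v0.1) * a + (v2.1 - v0.1) * b ∧ p ∣ (v1.2 - v0.2) * a + (v2.2 - v0.2) * b := by
      unfold tdet at hd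
      obtain ⟨t, ht⟩ := h
      have tr : ∀ x y : ℤ, (p ∣ c * (x * a + y * b)) → (p ∣ d * (x * a + y * b)) → p ∣ x * a + y * b := by
        intro x y h1 h2
        rcases hp.dvd_or_dvd h1 with h1 | h1
        · rcases hp.dvd_or_dvd h2 with h2 | h2
          · exact absurd ⟨h1, h2⟩ hnd
          · exact h2
        · exact h1
      rcases hcd with ⟨rfl, rfl⟩ | ⟨rfl, rfl⟩
      · refine ⟨⟨t, ht⟩, tr _ _ ⟨(v1.2 - v0.2) * t + b, ?_⟩ ⟨(v2.2 - v0.2) * t - a, ?_⟩⟩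
        · linear_combination (v1.2 - v0.2) * ht + b * hd
        · linear_combination (v2.2 - v0.2) * ht - a * hd
      · refine ⟨tr _ _ ⟨(v1.1 - v0.1) * t - b, ?_⟩ ⟨(v2.1 - v0.1) * t + a, ?_⟩, ⟨t, ht⟩⟩
        · linear_combination (v1.1 - v0.1) * ht - b * hd
        · linear_combination (v2.1 - v0.1) * ht + a * hd
    obtain ⟨⟨x, hx⟩, ⟨y, hy⟩⟩ := h12
    have e1 : tdet v0 (v0.1 + x, v0.2 + y) v2 = a := by
      unfold tdet at *
      apply mul_left_cancel₀ hp0.ne'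
      simp only
      linear_combination -(v2.2 - v0.2) * hx + (v2.1 - v0.1) * hy + a * hd
    have e2 : tdet v0 v1 (v0.1 + x, v0.2 + y) = b := by
      unfold tdet at *
      apply mul_left_cancel₀ hp0.ne'
      simp only
      linear_combination (v1.2 - v0.2) * hx - (v1.1 - v0.1) * hy + b * hd
    exact ⟨(v0.1 + x, v0.2 + y), by rw [e1, e2]; exact hP, e1, e2⟩

/-- interior predicate -/
def IP (p a b : ℤ) : Prop := 0 < a ∧ 0 < b ∧ a + b < p
/-- boundary predicate -/
def BP (p a b : ℤ) : Prop := (0 ≤ a ∧ 0 ≤ b ∧ a + b ≤ p) ∧ ¬ (0 < a ∧ 0 < b ∧ a + b < p)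

lemma dvd_small {p a : ℤ} (h : p ∣ a) (h0 : 0 ≤ a) (h1 : a ≤ p) : a = 0 ∨ a = p := by
  rcases h0.eq_or_lt with h2 | h2
  · exact Or.inl h2.symm
  · exact Or.inr (le_antisymm h1 (Int.le_of_dvd h2 h))

lemma generic_B (p c d : ℤ) (hp : Prime p) (hp0 : 0 < p) (hc : ¬ p ∣ c) (hd : ¬ p ∣ d) (hcd : ¬ p ∣ c - d) :
    Set.ncard {q : ℤ × ℤ | p ∣ c * q.1 + d * q.2 ∧ BP p q.1 q.2} = 3 := by
  have : {q : ℤ × ℤ | p ∣ c * q.1 + d * q.2 ∧ BP p q.1 q.2} = {(0, 0), (p, 0), (0, p)} := by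
    ext ⟨a, b⟩
    simp only [Set.mem_ofPred_eq, BP, Set.mem_insert_iff, Set.mem_singleton_iff, Prod.mk.injEq]
    constructor
    · rintro ⟨h, ⟨h1, h2, h3⟩, h4⟩
      have : a = 0 ∨ b = 0 ∨ b = p - a := by omega
      rcases this with rfl | rfl | rfl
      · have := (hp.dvd_or_dvd (by simpa using h : p ∣ d * b)).resolve_left hd
        have := dvd_small this h2 (by omega)
        omega
      · have := (hp.dvd_or_dvd (by simpa using h : p ∣ c * a)).resolve_left hc
        have := dvd_small this h1 (by omega)
        omega
      · have h5 : p ∣ (c - d) * a := by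
          rw [show (c - d) * a = (c * a + d * (p - a)) - d * p by ring]
          exact dvd_sub h (dvd_mul_left _ d)
        have := (hp.dvd_or_dvd h5).resolve_left hcd
        have := dvd_small this h1 (by omega)
        omega
    · rintro (⟨rfl, rfl⟩ | ⟨rfl, rfl⟩ | ⟨rfl, rfl⟩) <;> simp <;> omega
  rw [this, Set.ncard_eq_three]
  exact ⟨_, _, _, by simp; omega, by simp; omega, by simp; omega, rfl⟩

lemma generic_I (p : ℕ) (c d : ℤ) (hp : p.Prime) (hc : ¬ (p:ℤ) ∣ c) (hd : ¬ (p:ℤ) ∣ d) (hcd : ¬ (p:ℤ) ∣ c - d) :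
    Set.ncard {q : ℤ × ℤ | (p:ℤ) ∣ c * q.1 + d * q.2 ∧ IP p q.1 q.2} = (p - 1) / 2 := by
  have hp' : Prime (p:ℤ) := Nat.prime_iff_prime_int.mp hp
  have hp0 : 0 < (p:ℤ) := by exact_mod_cast hp.pos
  set I := {q : ℤ × ℤ | (p:ℤ) ∣ c * q.1 + d * q.2 ∧ IP p q.1 q.2} with hI
  set J := {q : ℤ × ℤ | (p:ℤ) ∣ c * q.1 + d * q.2 ∧ (q.1 < p ∧ q.2 < p ∧ p < q.1 + q.2)} with hJ
  set K := {q : ℤ × ℤ | (p:ℤ) ∣ c * q.1 + d * q.2 ∧ (0 < q.1 ∧ q.1 < p ∧ 0 < q.2 ∧ q.2 < p)} with hK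
  have hKf : K.Finite := by
    apply ((Set.finite_Icc (0:ℤ) p).prod (Set.finite_Icc (0:ℤ) p)).subset
    rintro ⟨a, b⟩ ⟨_, h1, h2, h3, h4⟩
    exact ⟨⟨h1.le, h2.le⟩, ⟨h3.le, h4.le⟩⟩
  have hU : I ∪ J = K := by
    ext ⟨a, b⟩
    simp only [hI, hJ, hK, IP, Set.mem_union, Set.mem_ofPred_eq]
    constructor
    · rintro (⟨h, _, _, _⟩ | ⟨h, _, _, _⟩) <;> exact ⟨h, by omega⟩
    · rintro ⟨h, h1, h2, h3, h4⟩
      have : a + b ≠ p := by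
        intro hab
        obtain rfl : b = p - a := by omega
        have h5 : (p:ℤ) ∣ (c - d) * a := by
          rw [show (c - d) * a = (c * a + d * (p - a)) - d * p by ring]
          exact dvd_sub h (dvd_mul_left _ d)
        have := (hp'.dvd_or_dvd h5).resolve_left hcd
        have := dvd_small this h1.le (by omega)
        omega
      rcases lt_or_gt_of_ne this with h6 | h6
      · exact Or.inl ⟨h, by omega⟩
      · exact Or.inr ⟨h, by omega⟩
  have hdis : Disjoint I J := by
    rw [Set.disjoint_left]
    rintro ⟨a, b⟩ ⟨_, h⟩ ⟨_, h'⟩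
    simp only [IP] at h h'
    omega
  have hIJ : J.ncard = I.ncard := by
    rw [← Set.ncard_image_of_injective I (f := fun q : ℤ × ℤ => ((p:ℤ) - q.1, (p:ℤ) - q.2))
      (by rintro ⟨a, b⟩ ⟨a', b'⟩ h; simp at h; simp [h])]
    congr 1
    ext ⟨a, b⟩
    have hdv : ∀ x y : ℤ, (p:ℤ) ∣ c * x + d * y → (p:ℤ) ∣ c * (p - x) + d * (p - y) := by
      intro x y h
      rw [show c * (p - x) + d * (p - y) = (c + d) * p - (c * x + d * y) by ring]
      exact dvd_sub (dvd_mul_left _ _) h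
    simp only [hI, hJ, IP, Set.mem_image, Set.mem_ofPred_eq, Prod.mk.injEq]
    constructor
    · rintro ⟨h, h1⟩
      exact ⟨(p - a, p - b), ⟨hdv _ _ h, by simp only; omega⟩, by simp, by simp⟩
    · rintro ⟨⟨x, y⟩, ⟨h, h1⟩, rfl, rfl⟩
      exact ⟨hdv _ _ h, by simp only at h1 ⊢; omega⟩
  have hKc : K.ncard = p - 1 := by
    have hinj : Set.InjOn Prod.fst K := by
      rintro ⟨a, b⟩ ⟨h, h1, h2, h3, h4⟩ ⟨a', b'⟩ ⟨h', _, _, h3', h4'⟩ e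
      simp only at *
      subst e
      have h5 : (p:ℤ) ∣ d * (b - b') := by
        rw [show d * (b - b') = (c * a + d * b) - (c * a + d * b') by ring]
        exact dvd_sub h h'
      have h6 := (hp'.dvd_or_dvd h5).resolve_left hd
      have := Int.eq_zero_of_abs_lt_dvd h6 (by rw [abs_lt]; omega)
      ext
      · rfl
      · simp only; omega
    rw [← Set.ncard_image_of_injOn hinj]
    have : Prod.fst '' K = ((Finset.Ioo (0:ℤ) p : Finset ℤ) : Set ℤ) := by
      ext a
      simp only [Finset.coe_Ioo, Set.mem_image, Set.mem_Ioo]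
      constructor
      · rintro ⟨q, ⟨_, h1, h2, _⟩, rfl⟩; exact ⟨h1, h2⟩
      · rintro ⟨h1, h2⟩
        have hco : IsCoprime (p:ℤ) d := (hp'.coprime_iff_not_dvd).mpr hd
        obtain ⟨x, y, hxy⟩ := hco
        have hdv : (p:ℤ) ∣ c * a + d * ((-(y * c * a)) % p) := by
          have e := Int.emod_add_mul_ediv (-(y * c * a)) p
          refine ⟨c * a * x - d * ((-(y * c * a)) / p), ?_⟩
          linear_combination d * e - c * a * hxy
        have h3 := Int.emod_nonneg (-(y * c * a)) hp0.ne'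
        have h4 := Int.emod_lt_of_pos (-(y * c * a)) hp0
        refine ⟨(a, (-(y * c * a)) % p), ⟨hdv, h1, h2, lt_of_le_of_ne h3 ?_, h4⟩, rfl⟩
        intro h5
        simp only at h5
        rw [← h5] at hdv
        have := (hp'.dvd_or_dvd (by simpa using hdv : (p:ℤ) ∣ c * a)).resolve_left hc
        have := dvd_small this h1.le h2.le
        omega
    rw [this, Set.ncard_coe_finset, Int.card_Ioo]
    omega
  have := Set.ncard_union_eq hdis (hKf.subset (hU ▸ Set.subset_union_left)) (hKf.subset (hU ▸ Set.subset_union_right))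
  rw [hU, hKc, hIJ] at this
  omega

lemma ncard_ins (p : ℕ) (f : ℤ → ℤ × ℤ) (hf : Function.Injective f) (x : ℤ × ℤ) (hx : ∀ a, f a ≠ x) :
    Set.ncard (insert x (f '' Set.Icc 0 (p:ℤ))) = p + 2 := by
  rw [Set.ncard_insert_of_notMem (by rintro ⟨a, _, h⟩; exact hx a h) ((Set.finite_Icc _ _).image _),
    Set.ncard_image_of_injective _ hf, ← Finset.coe_Icc, Set.ncard_coe_finset, Int.card_Icc]
  omega

lemma special (p : ℕ) (c d : ℤ) (hp : p.Prime) (hnd : ¬ ((p:ℤ) ∣ c ∧ (p:ℤ) ∣ d))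
    (hsp : (p:ℤ) ∣ c ∨ (p:ℤ) ∣ d ∨ (p:ℤ) ∣ c - d) :
    Set.ncard {q : ℤ × ℤ | (p:ℤ) ∣ c * q.1 + d * q.2 ∧ BP p q.1 q.2} = p + 2 ∧
    Set.ncard {q : ℤ × ℤ | (p:ℤ) ∣ c * q.1 + d * q.2 ∧ IP p q.1 q.2} = 0 := by
  have hp' : Prime (p:ℤ) := Nat.prime_iff_prime_int.mp hp
  have hp0 : 0 < (p:ℤ) := by exact_mod_cast hp.pos
  rcases hsp with h | h | h
  · have hd : ¬ (p:ℤ) ∣ d := fun h' => hnd ⟨h, h'⟩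
    have hiff : ∀ a b : ℤ, (p:ℤ) ∣ c * a + d * b ↔ (p:ℤ) ∣ b := by
      intro a b
      rw [dvd_add_right (h.mul_right a), hp'.dvd_mul]; tauto
    simp only [hiff]
    constructor
    · rw [← ncard_ins p (fun a => (a, 0)) (by intro a b h; simpa using h) (0, (p:ℤ)) (by intro a; simp; omega)]
      congr 1
      ext ⟨a, b⟩
      simp only [BP, Set.mem_ofPred_eq, Set.mem_insert_iff, Set.mem_image, Set.mem_Icc, Prod.mk.injEq]
      constructor
      · rintro ⟨h1, h2⟩
        rcases dvd_small h1 (by omega) (by omega) with rfl | rfl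
        · exact Or.inr ⟨a, by omega, rfl, rfl⟩
        · exact Or.inl (by omega)
      · rintro (⟨rfl, rfl⟩ | ⟨x, h1, rfl, rfl⟩) <;> simp <;> omega
    · convert Set.ncard_empty (ℤ × ℤ)
      ext ⟨a, b⟩
      simp only [IP, Set.mem_ofPred_eq, Set.mem_empty_iff_false, iff_false]
      rintro ⟨h1, h2⟩
      have := dvd_small h1 (by omega) (by omega)
      omega
  · have hd : ¬ (p:ℤ) ∣ c := fun h' => hnd ⟨h', h⟩
    have hiff : ∀ a b : ℤ, (p:ℤ) ∣ c * a + d * b ↔ (p:ℤ) ∣ a := by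
      intro a b
      rw [dvd_add_left (h.mul_right b), hp'.dvd_mul]; tauto
    simp only [hiff]
    constructor
    · rw [← ncard_ins p (fun a => (0, a)) (by intro a b h; simpa using h) ((p:ℤ), 0) (by intro a; simp; omega)]
      congr 1
      ext ⟨a, b⟩
      simp only [BP, Set.mem_ofPred_eq, Set.mem_insert_iff, Set.mem_image, Set.mem_Icc, Prod.mk.injEq]
      constructor
      · rintro ⟨h1, h2⟩
        rcases dvd_small h1 (by omega) (by omega) with rfl | rfl
        · exact Or.inr ⟨b, by omega, rfl, rfl⟩
        · exact Or.inl (by omega)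
      · rintro (⟨rfl, rfl⟩ | ⟨x, h1, rfl, rfl⟩) <;> simp <;> omega
    · convert Set.ncard_empty (ℤ × ℤ)
      ext ⟨a, b⟩
      simp only [IP, Set.mem_ofPred_eq, Set.mem_empty_iff_false, iff_false]
      rintro ⟨h1, h2⟩
      have := dvd_small h1 (by omega) (by omega)
      omega
  · have hd : ¬ (p:ℤ) ∣ d := fun h' => hnd ⟨by simpa using dvd_add h h', h'⟩
    have hiff : ∀ a b : ℤ, (p:ℤ) ∣ c * a + d * b ↔ (p:ℤ) ∣ a + b := by
      intro a b
      have : c * a + d * b = (c - d) * a + d * (a + b) := by ring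
      rw [this, dvd_add_right (h.mul_right a), hp'.dvd_mul]; tauto
    simp only [hiff]
    constructor
    · rw [← ncard_ins p (fun a => (a, p - a)) (by intro a b h; simp at h; exact h) (0, 0) (by intro a; simp; omega)]
      congr 1
      ext ⟨a, b⟩
      simp only [BP, Set.mem_ofPred_eq, Set.mem_insert_iff, Set.mem_image, Set.mem_Icc, Prod.mk.injEq]
      constructor
      · rintro ⟨h1, h2⟩
        rcases dvd_small h1 (by omega) (by omega) with h3 | h3
        · exact Or.inl (by omega)
        · exact Or.inr ⟨a, by omega, rfl, by omega⟩
      · rintro (⟨rfl, rfl⟩ | ⟨x, h1, rfl, rfl⟩) <;> simp <;> omega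
    · convert Set.ncard_empty (ℤ × ℤ)
      ext ⟨a, b⟩
      simp only [IP, Set.mem_ofPred_eq, Set.mem_empty_iff_false, iff_false]
      rintro ⟨h1, h2⟩
      have := dvd_small h1 (by omega) (by omega)
      omega

lemma counts (p : ℕ) (hp : p.Prime) (v0 v1 v2 : ℤ × ℤ) (hdet : tdet v0 v1 v2 = p) (c d : ℤ)
    (hcd : (c = v1.1 - v0.1 ∧ d = v2.1 - v0.1) ∨ (c = v1.2 - v0.2 ∧ d = v2.2 - v0.2))
    (hnd : ¬ ((p:ℤ) ∣ c ∧ (p:ℤ) ∣ d)) :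
    (((p:ℤ) ∣ c ∨ (p:ℤ) ∣ d ∨ (p:ℤ) ∣ c - d) →
      bcount (convexHull ℝ {toR2 v0, toR2 v1, toR2 v2}) = p + 2 ∧ icount (convexHull ℝ {toR2 v0, toR2 v1, toR2 v2}) = 0) ∧
    (¬ ((p:ℤ) ∣ c ∨ (p:ℤ) ∣ d ∨ (p:ℤ) ∣ c - d) →
      bcount (convexHull ℝ {toR2 v0, toR2 v1, toR2 v2}) = 3 ∧ icount (convexHull ℝ {toR2 v0, toR2 v1, toR2 v2}) = (p - 1) / 2) := by
  have hp' : Prime (p:ℤ) := Nat.prime_iff_prime_int.mp hp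
  have hp0 : 0 < (p:ℤ) := by exact_mod_cast hp.pos
  have hB : bcount (convexHull ℝ {toR2 v0, toR2 v1, toR2 v2}) =
      Set.ncard {q : ℤ × ℤ | (p:ℤ) ∣ c * q.1 + d * q.2 ∧ BP p q.1 q.2} := by
    rw [← ncard_pts p v0 v1 v2 hp' hdet hp0 c d hcd hnd]
    unfold bcount BP
    simp only [mem_frontier_tri v0 v1 v2 _ (hdet ▸ hp0), hdet]
  have hI : icount (convexHull ℝ {toR2 v0, toR2 v1, toR2 v2}) =
      Set.ncard {q : ℤ × ℤ | (p:ℤ) ∣ c * q.1 + d * q.2 ∧ IP p q.1 q.2} := by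
    rw [← ncard_pts p v0 v1 v2 hp' hdet hp0 c d hcd hnd]
    unfold icount IP
    simp only [mem_interior_tri v0 v1 v2 _ (hdet ▸ hp0), hdet]
  rw [hB, hI]
  refine ⟨special p c d hp hnd, fun h => ?_⟩
  push Not at h
  exact ⟨generic_B p c d hp' hp0 h.1 h.2.1 h.2.2, generic_I p c d hp h.1 h.2.1 h.2.2⟩

lemma forward (p : ℕ) (hp : p.Prime) (v0 v1 v2 : ℤ × ℤ) (hdet : tdet v0 v1 v2 = p) :
    (bcount (convexHull ℝ {toR2 v0, toR2 v1, toR2 v2}) = 3 ∧ icount (convexHull ℝ {toR2 v0, toR2 v1, toR2 v2}) = (p - 1) / 2) ∨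
    (bcount (convexHull ℝ {toR2 v0, toR2 v1, toR2 v2}) = p + 2 ∧ icount (convexHull ℝ {toR2 v0, toR2 v1, toR2 v2}) = 0) := by
  have key : ∃ c d : ℤ, ((c = v1.1 - v0.1 ∧ d = v2.1 - v0.1) ∨ (c = v1.2 - v0.2 ∧ d = v2.2 - v0.2)) ∧
      ¬ ((p:ℤ) ∣ c ∧ (p:ℤ) ∣ d) := by
    by_contra hcon
    push Not at hcon
    obtain ⟨⟨x, hx⟩, ⟨y, hy⟩⟩ := hcon _ _ (Or.inl ⟨rfl, rfl⟩)
    obtain ⟨⟨x', hx'⟩, ⟨y', hy'⟩⟩ := hcon _ _ (Or.inr ⟨rfl, rfl⟩)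
    unfold tdet at hdet
    rw [hx, hy, hx', hy'] at hdet
    have hp0 : (p:ℤ) ≠ 0 := by exact_mod_cast hp.ne_zero
    have h1 : (p:ℤ) * (x * y' - x' * y) = 1 := by
      apply mul_left_cancel₀ hp0
      linear_combination hdet
    have := Int.isUnit_iff.mp (IsUnit.of_mul_eq_one _ h1)
    have := hp.two_le
    omega
  obtain ⟨c, d, hcd, hnd⟩ := key
  have := counts p hp v0 v1 v2 hdet c d hcd hnd
  tauto

/-- For an odd prime `p`, the lattice triangles of normalized volume `p` (i.e. `2a(T) = p`)
realize exactly the pairs `(b, i) ∈ {(3, (p−1)/2), (p+2, 0)}`. -/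
theorem prime_volume_triangles (p : ℕ) (hp : p.Prime) (hodd : Odd p) :
    (∀ T : Set (ℝ × ℝ), IsLatticeTriangle T → 2 * area T = (p : ℝ) →
      (bcount T = 3 ∧ icount T = (p - 1) / 2) ∨ (bcount T = p + 2 ∧ icount T = 0)) ∧
    (∃ T : Set (ℝ × ℝ), IsLatticeTriangle T ∧ 2 * area T = (p : ℝ) ∧
      bcount T = 3 ∧ icount T = (p - 1) / 2) ∧
    (∃ T : Set (ℝ × ℝ), IsLatticeTriangle T ∧ 2 * area T = (p : ℝ) ∧
      bcount T = p + 2 ∧ icount T = 0) := by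
  have hp3 : 3 ≤ p := by
    have := hp.two_le
    obtain ⟨k, hk⟩ := hodd
    omega
  have hdet : ∀ k : ℤ, tdet (0, 0) (1, 0) (k, p) = p := by intro k; simp [tdet]
  have h1 : ¬ (p:ℤ) ∣ 1 := fun h => by have := Int.le_of_dvd one_pos h; omega
  have h2 : ¬ (p:ℤ) ∣ 2 := fun h => by have := Int.le_of_dvd two_pos h; omega
  have hne : (p:ℤ) ≠ 0 := by omega
  refine ⟨?_, ?_, ?_⟩
  · rintro T ⟨v0, v1, v2, -, rfl⟩ hT
    rw [area_tri] at hT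
    have hT' : |tdet v0 v1 v2| = (p:ℤ) := by exact_mod_cast hT
    rcases (abs_eq (by omega)).mp hT' with h | h
    · exact forward p hp v0 v1 v2 h
    · have : tdet v0 v2 v1 = p := by
        unfold tdet at *
        linarith
      have := forward p hp v0 v2 v1 this
      rwa [Set.pair_comm (toR2 v2)] at this
  · refine ⟨_, ⟨(0, 0), (1, 0), (2, p), affInd _ _ _ (by rw [hdet]; exact hne), rfl⟩, ?_, ?_⟩
    · rw [area_tri, hdet]; simp
    · refine (counts p hp _ _ _ (hdet 2) 1 2 (Or.inl (by simp)) (fun h => h1 h.1)).2 ?_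
      rintro (h | h | h)
      · exact h1 h
      · exact h2 h
      · norm_num at h
        omega
  · refine ⟨_, ⟨(0, 0), (1, 0), (0, p), affInd _ _ _ (by rw [hdet]; exact hne), rfl⟩, ?_, ?_⟩
    · rw [area_tri, hdet]; simp
    · exact (counts p hp _ _ _ (hdet 0) 1 0 (Or.inl (by simp)) (fun h => h1 h.1)).1 (by simp)
end

section
/- Let c ≥ 2 be an integer and let T be a lattice triangle with vertices (0,0), (q, 0), (s, p) where p > 0, q > 0, so that a(T) = p·q/2. If (2·a(T) + 1 + 2(c+1)²)/(c+1) ≤ b(T) ≤ q + 2p, then (p − c − 1)·q ≤ 2(c+1)(p − c − 1) − 1; in particular p ≠ c + 1. -/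
open MeasureTheory

/-- Explicit description of the triangle. -/
lemma tri_eq_s13 (p q s : ℝ) (hp : 0 < p) (hq : 0 < q) :
    convexHull ℝ {((0:ℝ), (0:ℝ)), (q, 0), (s, p)} =
      {z : ℝ × ℝ | 0 ≤ z.2 ∧ z.2 ≤ p ∧ s * z.2 ≤ p * z.1 ∧
        p * z.1 ≤ s * z.2 + q * (p - z.2)} := by
  apply Set.Subset.antisymm
  · apply convexHull_min
    · rintro z (rfl | rfl | rfl)
      · refine ⟨le_rfl, hp.le, by simp, ?_⟩
        simp only [mul_zero, sub_zero, zero_add]; positivity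
      · refine ⟨le_rfl, hp.le, ?_, ?_⟩
        · simp only [mul_zero]; positivity
        · simp only [mul_zero, sub_zero, zero_add]; linarith
      · refine ⟨hp.le, le_rfl, ?_, ?_⟩ <;> simp only <;> linarith
    · rintro ⟨x, y⟩ ⟨h1, h2, h3, h4⟩ ⟨x', y'⟩ ⟨k1, k2, k3, k4⟩ a b ha hb hab
      simp only at h1 h2 h3 h4 k1 k2 k3 k4
      obtain rfl : b = 1 - a := by linarith
      refine ⟨?_, ?_, ?_, ?_⟩ <;>
        simp only [Prod.smul_mk, Prod.mk_add_mk, smul_eq_mul]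
      · positivity
      · nlinarith [mul_le_mul_of_nonneg_left h2 ha, mul_le_mul_of_nonneg_left k2 hb]
      · nlinarith [mul_le_mul_of_nonneg_left h3 ha, mul_le_mul_of_nonneg_left k3 hb]
      · nlinarith [mul_le_mul_of_nonneg_left h4 ha, mul_le_mul_of_nonneg_left k4 hb]
  · rintro ⟨x, y⟩ ⟨h1, h2, h3, h4⟩
    simp only at h1 h2 h3 h4
    have key := (convex_convexHull ℝ {((0:ℝ), (0:ℝ)), (q, 0), (s, p)}).sum_mem
      (t := (Finset.univ : Finset (Fin 3)))
      (w := ![1 - y / p - (p * x - s * y) / (p * q), (p * x - s * y) / (p * q), y / p])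
      (z := ![((0:ℝ), (0:ℝ)), (q, 0), (s, p)]) ?_ ?_ ?_
    · convert key using 1
      simp [Fin.sum_univ_three]
      constructor <;> field_simp
      ring
    · intro i _
      fin_cases i
      · have : 1 - y / p - (p * x - s * y) / (p * q) =
          (s * y + q * (p - y) - p * x) / (p * q) := by field_simp; ring
        simp only [Fin.zero_eta, Matrix.cons_val_zero]
        rw [this]
        exact div_nonneg (by linarith) (by positivity)
      · exact div_nonneg (by linarith) (by positivity)
      · exact div_nonneg (by linarith) (by positivity)
    · simp [Fin.sum_univ_three]
    · intro i _
      apply subset_convexHull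
      fin_cases i <;> simp

lemma tri_area (p q s : ℝ) (hp : 0 < p) (hq : 0 < q) :
    area (convexHull ℝ {((0:ℝ), (0:ℝ)), (q, 0), (s, p)}) = p * q / 2 := by
  rw [tri_eq_s13 p q s hp hq, area]
  have hm : MeasurableSet {z : ℝ × ℝ | 0 ≤ z.2 ∧ z.2 ≤ p ∧ s * z.2 ≤ p * z.1 ∧
        p * z.1 ≤ s * z.2 + q * (p - z.2)} := by
    apply IsClosed.measurableSet
    have e1 : IsClosed {z : ℝ × ℝ | 0 ≤ z.2} := isClosed_le (by fun_prop) (by fun_prop)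
    have e2 : IsClosed {z : ℝ × ℝ | z.2 ≤ p} := isClosed_le (by fun_prop) (by fun_prop)
    have e3 : IsClosed {z : ℝ × ℝ | s * z.2 ≤ p * z.1} :=
      isClosed_le (by fun_prop) (by fun_prop)
    have e4 : IsClosed {z : ℝ × ℝ | p * z.1 ≤ s * z.2 + q * (p - z.2)} :=
      isClosed_le (by fun_prop) (by fun_prop)
    exact e1.inter (e2.inter (e3.inter e4))
  rw [Measure.volume_eq_prod, Measure.prod_apply_symm hm]
  have hs : ∀ y : ℝ, volume ((fun x : ℝ => (x, y)) ⁻¹'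
      {z : ℝ × ℝ | 0 ≤ z.2 ∧ z.2 ≤ p ∧ s * z.2 ≤ p * z.1 ∧
        p * z.1 ≤ s * z.2 + q * (p - z.2)}) =
      (Set.Icc 0 p).indicator (fun y => ENNReal.ofReal (q * (p - y) / p)) y := by
    intro y
    by_cases hy : y ∈ Set.Icc 0 p
    · rw [Set.indicator_of_mem hy]
      have : ((fun x : ℝ => (x, y)) ⁻¹'
        {z : ℝ × ℝ | 0 ≤ z.2 ∧ z.2 ≤ p ∧ s * z.2 ≤ p * z.1 ∧
        p * z.1 ≤ s * z.2 + q * (p - z.2)}) =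
        Set.Icc (s * y / p) ((s * y + q * (p - y)) / p) := by
        ext x
        simp only [Set.mem_preimage, Set.mem_ofPred_eq, Set.mem_Icc]
        rw [div_le_iff₀ hp, le_div_iff₀ hp, mul_comm x p]
        exact ⟨fun h => h.2.2, fun h => ⟨hy.1, hy.2, h⟩⟩
      rw [this, Real.volume_Icc]
      congr 1
      ring
    · rw [Set.indicator_of_notMem hy]
      convert measure_empty (μ := (volume : Measure ℝ))
      ext x
      simp only [Set.mem_preimage, Set.mem_ofPred_eq, Set.mem_empty_iff_false, iff_false]
      exact fun h => hy ⟨h.1, h.2.1⟩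
  simp_rw [hs]
  rw [lintegral_indicator measurableSet_Icc,
    ← integral_eq_lintegral_of_nonneg_ae, integral_Icc_eq_integral_Ioc,
    ← intervalIntegral.integral_of_le hp.le]
  · have : ∀ y : ℝ, q * (p - y) / p = q / p * (p - y) := fun y => by ring
    simp_rw [this]
    rw [intervalIntegral.integral_const_mul, intervalIntegral.integral_sub (by simp) (by simp)]
    simp
    field_simp
    ring
  · filter_upwards [ae_restrict_mem measurableSet_Icc] with y hy
    exact div_nonneg (mul_nonneg hq.le (by linarith [hy.2])) hp.le
  · exact Continuous.aestronglyMeasurable (by fun_prop)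

/-- Let `c ≥ 2` and let `T` be the lattice triangle with vertices `(0,0)`, `(q,0)`, `(s,p)`
with `p, q > 0` (so `a(T) = pq/2`). If `(2a(T) + 1 + 2(c+1)²)/(c+1) ≤ b(T) ≤ q + 2p`,
then `(p − c − 1)·q ≤ 2(c+1)(p − c − 1) − 1`; in particular `p ≠ c + 1`. -/
theorem key_inequality (c p q s : ℤ) (hc : 2 ≤ c) (hp : 0 < p) (hq : 0 < q)
    (h1 : (2 * area (convexHull ℝ {toR2 (0, 0), toR2 (q, 0), toR2 (s, p)}) + 1 +
            2 * ((c : ℝ) + 1) ^ 2) / ((c : ℝ) + 1) ≤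
          (bcount (convexHull ℝ {toR2 (0, 0), toR2 (q, 0), toR2 (s, p)}) : ℝ))
    (h2 : (bcount (convexHull ℝ {toR2 (0, 0), toR2 (q, 0), toR2 (s, p)}) : ℝ) ≤
          (q : ℝ) + 2 * (p : ℝ)) :
    area (convexHull ℝ {toR2 (0, 0), toR2 (q, 0), toR2 (s, p)}) = (p : ℝ) * (q : ℝ) / 2 ∧
    (p - c - 1) * q ≤ 2 * (c + 1) * (p - c - 1) - 1 ∧ p ≠ c + 1 := by
  have hA : area (convexHull ℝ {toR2 (0, 0), toR2 (q, 0), toR2 (s, p)}) =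
      (p : ℝ) * (q : ℝ) / 2 := by
    have := tri_area (p : ℝ) q s (by exact_mod_cast hp) (by exact_mod_cast hq)
    simpa [toR2] using this
  have hc' : (0 : ℝ) < (c : ℝ) + 1 := by
    have : (2 : ℝ) ≤ c := by exact_mod_cast hc
    linarith
  have h3 := h1.trans h2
  rw [hA, div_le_iff₀ hc'] at h3
  have h4 : p * q + 1 + 2 * (c + 1) ^ 2 ≤ (q + 2 * p) * (c + 1) := by
    have : (p : ℝ) * q + 1 + 2 * (c + 1) ^ 2 ≤ (q + 2 * p) * (c + 1) := by linarith
    exact_mod_cast this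
  have h5 : (p - c - 1) * q ≤ 2 * (c + 1) * (p - c - 1) - 1 := by linarith
  refine ⟨hA, h5, ?_⟩
  rintro rfl
  ring_nf at h5
  omega
end
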